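/- arXiv:1611.04546 — 4 statements merged into one kernel-verified Lean document; each statement's English description precedes it below -/
import Mathlib

section
/- The largest induced forest of the 3-dimensional hypercube graph Q₃ has order exactly 5: there exists a set of 5 vertices of Q₃ that induces an acyclic subgraph, and every set of vertices of Q₃ that induces an acyclic subgraph has at most 5 elements. -/
/-- The 3-dimensional hypercube graph `Q₃`: vertices are functions `Fin 3 → Bool`,
adjacent iff they differ in exactly one coordinate. -/
def cubeGraph : SimpleGraph (Fin 3 → Bool) where
  Adj x y := ∃! i, x i ≠ y i
  symm := by
    constructor
    rintro x y ⟨i, hi, hu⟩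
    exact ⟨i, hi.symm, fun j hj => hu j hj.symm⟩
  loopless := by
    constructor
    rintro x ⟨i, hi, -⟩
    exact hi rfl

instance cubeAdjDecidable : DecidableRel cubeGraph.Adj := fun x y =>
  inferInstanceAs (Decidable (∃ i, x i ≠ y i ∧ ∀ j, x j ≠ y j → j = i))

/-- An induced forest contains no cyclic sequence of distinct, consecutively adjacent vertices. -/
lemma no_cycle_in_forest (S : Finset (Fin 3 → Bool))
    (h : (cubeGraph.induce (S : Set (Fin 3 → Bool))).IsAcyclic) (n : ℕ) (hn : 3 ≤ n)
    (f : Fin n → (Fin 3 → Bool)) (hf : Function.Injective f)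
    (hadj : ∀ i j, (SimpleGraph.cycleGraph n).Adj i j → cubeGraph.Adj (f i) (f j))
    (hS : ∀ i, f i ∈ S) : False := by
  refine SimpleGraph.isAcyclic_iff_free_cycleGraph.mp h n hn ⟨⟨⟨fun i => ⟨f i, hS i⟩, ?_⟩, ?_⟩⟩
  · intro i j hij
    exact hadj i j hij
  · intro i j hij
    exact hf (congrArg Subtype.val hij)

/-- The face on which coordinate `k` is constantly `b`, in cyclic order. -/
def faceCycle (k : Fin 3) (b : Bool) (i : Fin 4) : Fin 3 → Bool := fun j =>
  if j = k then b else if j = k + 1 then decide (i = 1 ∨ i = 2) else decide (i = 2 ∨ i = 3)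

/-- The hexagon avoiding the vertex `a` and its antipode. -/
def hexCycle (a : Fin 3 → Bool) (i : Fin 6) : Fin 3 → Bool := fun j =>
  xor (a j) (if j = 0 then decide (i.val < 3) else if j = 1 then decide (2 ≤ i.val ∧ i.val < 5)
    else decide (4 ≤ i.val ∨ i.val < 1))

lemma six_contains_cycle : ∀ S : Finset (Fin 3 → Bool), 6 ≤ S.card →
    (∃ k b, ∀ i, faceCycle k b i ∈ S) ∨ (∃ a, ∀ i, hexCycle a i ∈ S) := by
  decide +kernel

/-- A claw together with the vertex antipodal to its centre. -/
def clawSet : Finset (Fin 3 → Bool) :=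
  {![false, false, false], ![true, false, false], ![false, true, false],
    ![false, false, true], ![true, true, true]}

lemma claw_centre : ∀ x ∈ clawSet, ∀ y ∈ clawSet, ∀ z ∈ clawSet,
    cubeGraph.Adj x y → cubeGraph.Adj x z → y ≠ z → x = ![false, false, false] := by
  decide +kernel

/-- The largest induced forest of `Q₃` has order exactly 5. -/
theorem cubeGraph_max_induced_forest :
    (∃ S : Finset (Fin 3 → Bool), S.card = 5 ∧
      (cubeGraph.induce (S : Set (Fin 3 → Bool))).IsAcyclic) ∧
    (∀ S : Finset (Fin 3 → Bool),
      (cubeGraph.induce (S : Set (Fin 3 → Bool))).IsAcyclic → S.card ≤ 5) := by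
  refine ⟨⟨clawSet, by decide +kernel, ?_⟩, ?_⟩
  · rw [SimpleGraph.isAcyclic_iff_free_cycleGraph]
    rintro n hn ⟨⟨f, hf⟩⟩
    obtain ⟨m, rfl⟩ : ∃ m, n = m + 3 := ⟨n - 3, by omega⟩
    have key : ∀ i, (f i : Fin 3 → Bool) = ![false, false, false] := by
      intro i
      have h1 : (SimpleGraph.cycleGraph (m + 3)).Adj i (i + 1) := by
        rw [SimpleGraph.cycleGraph_adj]; right; exact add_sub_cancel_left i 1
      have h2 : (SimpleGraph.cycleGraph (m + 3)).Adj i (i - 1) := by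
        rw [SimpleGraph.cycleGraph_adj]; left; exact sub_sub_cancel i 1
      refine claw_centre _ (f i).2 _ (f (i + 1)).2 _ (f (i - 1)).2
        (f.map_adj h1) (f.map_adj h2) ?_
      intro h
      have h3 : i + 1 = i - 1 := hf (Subtype.ext h)
      have h4 : (1 + 1 : Fin (m + 3)) = 0 := by
        rwa [eq_sub_iff_add_eq, add_assoc, add_eq_left] at h3
      have h5 := congrArg Fin.val h4
      rw [Fin.val_add, Fin.val_one, Fin.val_zero, Nat.mod_eq_of_lt (by omega)] at h5
      omega
    have h01 : (0 : Fin (m + 3)) = 1 := hf (Subtype.ext ((key 0).trans (key 1).symm))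
    simp at h01
  · intro S h
    by_contra hc
    rcases six_contains_cycle S (by omega) with ⟨k, b, hS⟩ | ⟨a, hS⟩
    · refine no_cycle_in_forest S h 4 (by norm_num) (faceCycle k b) ?_ ?_ hS
      · clear hS; revert k b; decide +kernel
      · clear hS; revert k b; decide +kernel
    · refine no_cycle_in_forest S h 6 (by norm_num) (hexCycle a) ?_ ?_ hS
      · clear hS; revert a; decide +kernel
      · clear hS; revert a; decide +kernel
end

section
/- For any three pairwise non-adjacent vertices a, b, c of the hypercube graph Q₃, the set consisting of the five vertices of Q₃ other than a, b, c induces an acyclic subgraph of Q₃. -/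
/-- Parity of a vertex. -/
def cubePar (x : Fin 3 → Bool) : Bool := xor (x 0) (xor (x 1) (x 2))

theorem cubeAdj_par : ∀ x y : Fin 3 → Bool, (∃! i, x i ≠ y i) → cubePar x ≠ cubePar y := by
  unfold ExistsUnique
  decide +kernel

theorem cube_nonadj_par : ∀ x y : Fin 3 → Bool, x ≠ y → ¬ (∃! i, x i ≠ y i) →
    (∃ i, x i = y i) → cubePar x = cubePar y := by
  unfold ExistsUnique
  decide +kernel

/-- Two antipodal vertices have no common non-neighbour. -/
theorem cube_antipodal : ∀ x y : Fin 3 → Bool, (¬ ∃ i, x i = y i) → ∀ z : Fin 3 → Bool,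
    x ≠ z → y ≠ z → (∃! i, x i ≠ z i) ∨ (∃! i, y i ≠ z i) := by
  unfold ExistsUnique
  decide +kernel

set_option synthInstance.maxHeartbeats 400000 in
set_option synthInstance.maxSize 4000 in
theorem cube_fourth : ∀ a b : Fin 3 → Bool, a ≠ b → cubePar a = cubePar b →
    ∀ c : Fin 3 → Bool, a ≠ c → b ≠ c → cubePar a = cubePar c →
    ∀ x : Fin 3 → Bool, x ≠ a → x ≠ b → x ≠ c → cubePar x = cubePar a →
    x = fun i => xor (a i) (xor (b i) (c i)) := by
  decide +kernel

/-- If all edges pass through `d`, the graph is acyclic. -/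
theorem acyclic_of_star {V : Type*} (G : SimpleGraph V) (P : V → Prop)
    (hP : ∀ x y, P x → P y → x = y)
    (h : ∀ x y, G.Adj x y → P x ∨ P y) : G.IsAcyclic := by
  intro v p hp
  have h3 := hp.three_le_length
  have ht := hp.isTrail.edges_nodup
  match p, h3, ht with
  | .cons (v := u) h1 (.cons (v := w) h2 (.cons (v := x) h3 q)), _, ht =>
    have e1 := h _ _ h1
    have e2 := h _ _ h2
    have e3 := h _ _ h3
    have n1 := h1.ne
    have n2 := h2.ne
    have n3 := h3.ne
    simp only [SimpleGraph.Walk.edges_cons, List.nodup_cons, List.mem_cons, not_or,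
      Sym2.eq_iff] at ht
    grind

/-- For any three pairwise non-adjacent vertices `a, b, c` of `Q₃`, the five remaining
vertices induce an acyclic subgraph of `Q₃`. -/
theorem cubeGraph_remove_three_nonadjacent_acyclic (a b c : Fin 3 → Bool)
    (hab : a ≠ b) (hac : a ≠ c) (hbc : b ≠ c)
    (nab : ¬ cubeGraph.Adj a b) (nac : ¬ cubeGraph.Adj a c) (nbc : ¬ cubeGraph.Adj b c) :
    (cubeGraph.induce {x | x ≠ a ∧ x ≠ b ∧ x ≠ c}).IsAcyclic := by
  have pab : cubePar a = cubePar b := cube_nonadj_par a b hab nab (by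
    by_contra h
    exact (cube_antipodal a b h c hac hbc).elim nac nbc)
  have pac : cubePar a = cubePar c := cube_nonadj_par a c hac nac (by
    by_contra h
    refine (cube_antipodal a c h b hab hbc.symm).elim nab (fun h => nbc ?_)
    exact SimpleGraph.Adj.symm (G := cubeGraph) h)
  have key := cube_fourth a b hab pab c hac hbc pac
  apply acyclic_of_star _ (fun x => cubePar x.1 = cubePar a)
  · rintro ⟨x, hx1, hx2, hx3⟩ ⟨y, hy1, hy2, hy3⟩ hx hy
    exact Subtype.ext ((key x hx1 hx2 hx3 hx).trans (key y hy1 hy2 hy3 hy).symm)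
  · rintro ⟨x, hx⟩ ⟨y, hy⟩ hxy
    have := cubeAdj_par x y hxy
    revert this
    dsimp only
    cases cubePar x <;> cases cubePar y <;> cases cubePar a <;> simp
end

section
/- Let G be a finite simple graph and let S be a set of vertices of G such that the subgraph of G induced on S is isomorphic to the hypercube graph Q₃ and at most 3 edges of G have exactly one endpoint in S. Then for every set F of vertices of G disjoint from S that induces an acyclic subgraph of G, there exists a 5-element subset S' of S such that F ∪ S' induces an acyclic subgraph of G. -/
/-- The set of edges of `G` with exactly one endpoint in `S`. -/
def edgeCut {V : Type*} (G : SimpleGraph V) (S : Set V) : Set (Sym2 V) :=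
  {e | e ∈ G.edgeSet ∧ ∃ u v, e = s(u, v) ∧ u ∈ S ∧ v ∉ S}

open SimpleGraph in
/-- A cycle of `G` cannot live inside a set inducing an acyclic graph. -/
theorem acyclic_induce_iff {V : Type*} (G : SimpleGraph V) (A : Set V) :
    (G.induce A).IsAcyclic ↔
      ∀ (v : V) (c : G.Walk v v), c.IsCycle → ¬ ∀ x ∈ c.support, x ∈ A := by
  constructor
  · intro h v c hc hA
    refine h (c.induce A hA) ?_
    rw [← Walk.isCycle_map_iff_of_injective (f := (Embedding.induce A).toHom)
      (Embedding.induce (G := G) A).injective]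
    have := c.map_induce hA
    rw [this]
    exact hc
  · intro h v c hc
    refine h v (c.map (Embedding.induce A).toHom) ?_ ?_
    · exact (Walk.isCycle_map_iff_of_injective (Embedding.induce (G := G) A).injective).2 hc
    · intro x hx
      have hx' := (Walk.support_map (Embedding.induce A).toHom c) ▸ hx
      obtain ⟨y, -, rfl⟩ := List.mem_map.1 hx'
      exact y.2

open SimpleGraph in
/-- Two forests with at most one edge between them form a forest. -/
theorem acyclic_union {V : Type*} (G : SimpleGraph V) (A B : Set V) (hd : Disjoint A B)
    (hA : (G.induce A).IsAcyclic) (hB : (G.induce B).IsAcyclic)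
    (h1 : ∀ a ∈ A, ∀ b ∈ B, ∀ a' ∈ A, ∀ b' ∈ B, G.Adj a b → G.Adj a' b' → a = a' ∧ b = b') :
    (G.induce (A ∪ B)).IsAcyclic := by
  classical
  rw [acyclic_induce_iff] at *
  intro v c hc hAB
  have h2 : ∃ a ∈ c.support, a ∈ A := by
    by_contra! hn
    exact hB v c hc fun x hx => (hAB x hx).resolve_left (hn x hx)
  have h3 : ∃ b ∈ c.support, b ∈ B := by
    by_contra! hn
    exact hA v c hc fun x hx => (hAB x hx).resolve_right (hn x hx)
  obtain ⟨a, ha, haA⟩ := h2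
  obtain ⟨b, hb, hbB⟩ := h3
  have hc' := hc.rotate ha
  have hsup : ∀ x ∈ (c.rotate a ha).support, x ∈ A ∪ B := fun x hx =>
    hAB x ((Walk.mem_support_rotate_iff c a ha).1 hx)
  have hb' : b ∈ (c.rotate a ha).support := (Walk.mem_support_rotate_iff c a ha).2 hb
  generalize c.rotate a ha = w at *
  have hbA : b ∉ A := fun h => hd.le_bot ⟨h, hbB⟩
  have hnd := hc'.isTrail.edges_nodup
  have hsp := w.take_spec hb'
  obtain ⟨d1, hd1, hd1a, hd1b⟩ := (w.takeUntil b hb').exists_boundary_dart A haA hbA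
  obtain ⟨d2, hd2, hd2a, hd2b⟩ := (w.dropUntil b hb').exists_boundary_dart Aᶜ hbA (by simpa using haA)
  have e1 : d1.snd ∈ w.support := w.support_takeUntil_subset_support hb'
    (Walk.dart_snd_mem_support_of_mem_darts _ hd1)
  have e2 : d2.fst ∈ w.support := w.support_dropUntil_subset_support hb'
    (Walk.dart_fst_mem_support_of_mem_darts _ hd2)
  have k := h1 d1.fst hd1a d1.snd ((hsup _ e1).resolve_left hd1b) d2.snd (by simpa using hd2b)
    d2.fst ((hsup _ e2).resolve_left hd2a) d1.adj d2.adj.symm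
  rw [← hsp, Walk.edges_append, List.nodup_append] at hnd
  refine hnd.2.2 d1.edge (List.mem_map_of_mem hd1) d2.edge (List.mem_map_of_mem hd2) ?_
  rw [SimpleGraph.dart_edge_eq_iff]
  right
  ext
  · exact k.1
  · exact k.2

/-- Each vertex of the list has at most one neighbour later in the list. -/
def GoodList {W : Type*} (R : W → W → Prop) : List W → Prop
  | [] => True
  | v :: l => (∀ x ∈ l, ∀ y ∈ l, R v x → R v y → x = y) ∧ GoodList R l

instance GoodList.dec {W : Type*} [DecidableEq W] (R : W → W → Prop) [DecidableRel R] :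
    (l : List W) → Decidable (GoodList R l)
  | [] => isTrue trivial
  | v :: l => by
    unfold GoodList
    haveI := GoodList.dec R l
    infer_instance

theorem GoodList.acyclic {V : Type*} (G : SimpleGraph V) (l : List V) (hn : l.Nodup)
    (h : GoodList G.Adj l) : (G.induce {x | x ∈ l}).IsAcyclic := by
  induction l with
  | nil =>
    rw [acyclic_induce_iff]
    intro v c _ h
    simpa using h v c.start_mem_support
  | cons v l ih =>
    rw [List.nodup_cons] at hn
    have : {x | x ∈ v :: l} = {v} ∪ {x | x ∈ l} := by ext; simp
    rw [this]
    refine acyclic_union G _ _ (by simpa using hn.1) ?_ (ih hn.2 h.2) ?_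
    · exact SimpleGraph.IsAcyclic.of_subsingleton
    · rintro a rfl b hb a' rfl b' hb' h1 h2
      exact ⟨rfl, h.1 b hb b' hb' h1 h2⟩

/-- The hexagon avoiding `000` and `111`. -/
def hexList : List (Fin 3 → Bool) :=
  [![true, false, false], ![true, true, false], ![false, true, false],
   ![false, true, true], ![false, false, true], ![true, false, true]]

instance cubeDec : DecidableRel cubeGraph.Adj := fun x y =>
  inferInstanceAs (Decidable (∃ i, x i ≠ y i ∧ ∀ j, x j ≠ y j → j = i))

set_option maxRecDepth 100000 in
set_option maxHeartbeats 4000000 in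
theorem cube_list : ∀ a b : Fin 3 → Bool, ∃ k : Fin 6,
    a ∉ ((hexList.rotate k).tail.map fun x i => xor (a i) (x i)) ∧
    b ∉ ((hexList.rotate k).tail.map fun x i => xor (a i) (x i)) ∧
    ((hexList.rotate k).tail.map fun x i => xor (a i) (x i)).Nodup ∧
    ((hexList.rotate k).tail.map fun x i => xor (a i) (x i)).length = 5 ∧
    GoodList cubeGraph.Adj ((hexList.rotate k).tail.map fun x i => xor (a i) (x i)) := by
  decide +kernel

theorem GoodList.map {W V : Type*} (R : W → W → Prop) (R' : V → V → Prop) (f : W → V)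
    (hR : ∀ x y, R' (f x) (f y) → R x y) (l : List W) (h : GoodList R l) :
    GoodList R' (l.map f) := by
  induction l with
  | nil => trivial
  | cons v l ih =>
    refine ⟨?_, ih h.2⟩
    intro x hx y hy h1 h2
    obtain ⟨x, hx0, rfl⟩ := List.mem_map.1 hx
    obtain ⟨y, hy0, rfl⟩ := List.mem_map.1 hy
    rw [h.1 x hx0 y hy0 (hR _ _ h1) (hR _ _ h2)]

/-- Two elements hitting all but at most one of at most three edges. -/
theorem exists_pair {E V : Type*} (C : Set E) (hf : C.Finite) (hC : C.ncard ≤ 3) (S : Set V)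
    (s0 : V) (hs0 : s0 ∈ S) (P : E → V → Prop) (hP : ∀ e ∈ C, ∃ v ∈ S, P e v) :
    ∃ a ∈ S, ∃ b ∈ S, ∀ e ∈ C, ∀ e' ∈ C, ¬ P e a → ¬ P e b → ¬ P e' a → ¬ P e' b → e = e' := by
  by_contra! hcon
  obtain ⟨e1, h1, -⟩ := hcon s0 hs0 s0 hs0
  obtain ⟨a, ha, hea⟩ := hP e1 h1
  obtain ⟨e2, h2, -, -, h2a, -⟩ := hcon a ha a ha
  obtain ⟨b, hb, heb⟩ := hP e2 h2
  obtain ⟨e3, h3, e4, h4, h3a, h3b, h4a, h4b, hne⟩ := hcon a ha b hb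
  classical
  have hsub : (({e1, e2, e3, e4} : Finset E) : Set E) ⊆ C := by
    intro x hx
    simp at hx
    rcases hx with rfl | rfl | rfl | rfl <;> assumption
  have hle := Set.ncard_le_ncard hsub hf
  rw [Set.ncard_coe_finset, Finset.card_insert_of_notMem, Finset.card_insert_of_notMem,
    Finset.card_insert_of_notMem, Finset.card_singleton] at hle
  · omega
  · simpa using hne
  · simp only [Finset.mem_insert, Finset.mem_singleton]
    rintro (rfl | rfl) <;> contradiction
  · simp only [Finset.mem_insert, Finset.mem_singleton]
    rintro (rfl | rfl | rfl) <;> contradiction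

/-- If `S` induces a copy of `Q₃` in `G` with at most 3 edges of `G` leaving `S`, then
any induced forest `F` of `G` disjoint from `S` can be extended by 5 vertices of `S`. -/
theorem extend_forest_of_Q3_subgraph {V : Type*} [Fintype V] (G : SimpleGraph V)
    (S : Finset V)
    (hiso : Nonempty ((G.induce (S : Set V)) ≃g cubeGraph))
    (hcut : (edgeCut G (S : Set V)).ncard ≤ 3)
    (F : Set V) (hdisj : Disjoint F (S : Set V)) (hF : (G.induce F).IsAcyclic) :
    ∃ S' : Finset V, S' ⊆ S ∧ S'.card = 5 ∧
      (G.induce (F ∪ (S' : Set V))).IsAcyclic := by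
  classical
  obtain ⟨φ⟩ := hiso
  obtain ⟨a, ha, b, hb, hab⟩ := exists_pair (edgeCut G (S : Set V)) (Set.toFinite _) hcut
    (S : Set V) (φ.symm (fun _ => false)) (φ.symm (fun _ => false)).2 (fun e v => v ∈ e) (by
      rintro e ⟨-, u, v, rfl, hu, -⟩
      exact ⟨u, hu, by simp⟩)
  obtain ⟨k, hka, hkb, hnd, hlen, hgood⟩ := cube_list (φ ⟨a, ha⟩) (φ ⟨b, hb⟩)
  generalize ((hexList.rotate k).tail.map fun x i => xor (φ ⟨a, ha⟩ i) (x i)) = l at *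
  have hinj : Function.Injective (fun x => (φ.symm x : V)) :=
    Subtype.val_injective.comp φ.symm.injective
  have hmem : ∀ x ∈ l.map (fun x => (φ.symm x : V)), x ∈ S ∧ x ≠ a ∧ x ≠ b := by
    intro x hx
    obtain ⟨y, hy, rfl⟩ := List.mem_map.1 hx
    refine ⟨(φ.symm y).2, ?_, ?_⟩
    · rintro h
      have : φ.symm y = ⟨a, ha⟩ := Subtype.ext h
      rw [← this] at hka
      simp [hy] at hka
    · rintro h
      have : φ.symm y = ⟨b, hb⟩ := Subtype.ext h
      rw [← this] at hkb
      simp [hy] at hkb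
  have hnd' : (l.map (fun x => (φ.symm x : V))).Nodup := hnd.map hinj
  have hgood' : GoodList G.Adj (l.map (fun x => (φ.symm x : V))) :=
    GoodList.map cubeGraph.Adj G.Adj (fun x => (φ.symm x : V)) (fun x y hxy =>
      φ.symm.map_adj_iff.1 (show (G.induce (S : Set V)).Adj (φ.symm x) (φ.symm y) from hxy))
      l hgood
  refine ⟨(l.map (fun x => (φ.symm x : V))).toFinset, ?_, ?_, ?_⟩
  · intro x hx
    exact (hmem x (List.mem_toFinset.1 hx)).1
  · rw [List.toFinset_card_of_nodup hnd', List.length_map, hlen]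
  · have hset : (((l.map (fun x => (φ.symm x : V))).toFinset : Finset V) : Set V) =
        {x | x ∈ l.map (fun x => (φ.symm x : V))} := by
      ext; simp
    rw [hset]
    have hac := GoodList.acyclic G _ hnd' hgood'
    have hFS : ∀ x ∈ F, x ∉ S := fun x hx hs => hdisj.le_bot ⟨hx, hs⟩
    refine acyclic_union G _ _ ?_ hF hac ?_
    · rw [Set.disjoint_left]
      intro x hx hx'
      exact hFS x hx (hmem x hx').1
    · intro x hx y hy x' hx' y' hy' h1 h2
      obtain ⟨m1, m2, m3⟩ := hmem y hy
      obtain ⟨n1, n2, n3⟩ := hmem y' hy'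
      have hxa : ∀ z ∈ F, z ≠ a := fun z hz h => hFS z hz (h ▸ ha)
      have hxb : ∀ z ∈ F, z ≠ b := fun z hz h => hFS z hz (h ▸ hb)
      have := hab s(y, x) ⟨h1.symm, y, x, rfl, m1, hFS x hx⟩ s(y', x')
        ⟨h2.symm, y', x', rfl, n1, hFS x' hx'⟩
        (by simp [m2.symm, (hxa x hx).symm]) (by simp [m3.symm, (hxb x hx).symm])
        (by simp [n2.symm, (hxa x' hx').symm]) (by simp [n3.symm, (hxb x' hx').symm])
      rw [Sym2.eq_iff] at this
      rcases this with ⟨h, h'⟩ | ⟨h, h'⟩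
      · exact ⟨h', h⟩
      · exact absurd (h ▸ m1) (hFS x' hx')
end

section
/- Let G be a finite simple graph and let S and T be sets of vertices of G such that the subgraph of G induced on S is isomorphic to the hypercube graph Q₃, the subgraph of G induced on T is isomorphic to Q₃, at most 2 edges of G have exactly one endpoint in S, and at most 2 edges of G have exactly one endpoint in T. If S ≠ T, then S and T are disjoint. -/
instance cubeAdjDec : DecidableRel cubeGraph.Adj := fun x y =>
  inferInstanceAs (Decidable (∃ i, x i ≠ y i ∧ ∀ j, x j ≠ y j → j = i))

set_option maxRecDepth 100000 in
/-- Every nonempty proper vertex subset of the cube has at least three boundary edges. -/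
theorem cube_cut : ∀ A : Finset (Fin 3 → Bool), A ≠ ∅ → A ≠ Finset.univ →
    3 ≤ (Finset.univ.filter (fun p : (Fin 3 → Bool) × (Fin 3 → Bool) =>
      p.1 ∈ A ∧ p.2 ∉ A ∧ cubeGraph.Adj p.1 p.2)).card := by
  decide +kernel

/-- Any two `Q₃` subgraphs of `G` each with at most 2 edges of `G` leaving them
must be vertex-disjoint. -/
theorem Q3_low_degree_subgraphs_disjoint {V : Type*} [Fintype V] (G : SimpleGraph V)
    (S T : Finset V)
    (hS : Nonempty ((G.induce (S : Set V)) ≃g cubeGraph))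
    (hT : Nonempty ((G.induce (T : Set V)) ≃g cubeGraph))
    (hScut : (edgeCut G (S : Set V)).ncard ≤ 2)
    (hTcut : (edgeCut G (T : Set V)).ncard ≤ 2)
    (hne : S ≠ T) :
    Disjoint S T := by
  classical
  obtain ⟨f⟩ := hS
  obtain ⟨g⟩ := hT
  have hcard : S.card = T.card := by
    have e : (S : Set V) ≃ (T : Set V) := f.toEquiv.trans g.toEquiv.symm
    have := Fintype.card_congr e
    simpa using this
  by_contra hd
  rw [Finset.not_disjoint_iff] at hd
  obtain ⟨a, haS, haT⟩ := hd
  have hnsub : ¬ S ⊆ T := fun h => hne (Finset.eq_of_subset_of_card_le h hcard.ge)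
  obtain ⟨b, hbS, hbT⟩ := Finset.not_subset.1 hnsub
  let A : Finset (Fin 3 → Bool) := Finset.univ.filter (fun x => ((f.symm x : (S : Set V)) : V) ∈ T)
  have h1 : A ≠ ∅ := by
    apply Finset.Nonempty.ne_empty
    exact ⟨f ⟨a, haS⟩, by simp [A, haT]⟩
  have h2 : A ≠ Finset.univ := by
    intro h
    have : f ⟨b, hbS⟩ ∈ A := by rw [h]; exact Finset.mem_univ _
    simp [A, hbT] at this
  have h3 := cube_cut A h1 h2
  have h4 := Set.ncard_le_ncard_of_injOn
    (s := ((Finset.univ.filter (fun p : (Fin 3 → Bool) × (Fin 3 → Bool) =>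
      p.1 ∈ A ∧ p.2 ∉ A ∧ cubeGraph.Adj p.1 p.2) : Finset _) : Set _))
    (t := edgeCut G (T : Set V))
    (fun p : (Fin 3 → Bool) × (Fin 3 → Bool) => s(((f.symm p.1 : (S : Set V)) : V), ((f.symm p.2 : (S : Set V)) : V)))
    (by
      rintro ⟨x, y⟩ hp
      simp only [Finset.coe_filter, Finset.mem_univ, true_and, Set.mem_ofPred_eq, A,
        Finset.mem_filter] at hp
      obtain ⟨hx, hy, hxy⟩ := hp
      have hadj := f.symm.map_rel_iff.2 hxy
      exact ⟨hadj, _, _, rfl, hx, hy⟩)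
    (by
      rintro ⟨x, y⟩ hp ⟨x', y'⟩ hq heq
      simp only [Finset.coe_filter, Finset.mem_univ, true_and, Set.mem_ofPred_eq, A,
        Finset.mem_filter] at hp hq
      rcases Sym2.eq_iff.1 heq with ⟨e1, e2⟩ | ⟨e1, e2⟩
      · exact Prod.ext (f.symm.injective (Subtype.ext e1)) (f.symm.injective (Subtype.ext e2))
      · exact absurd (e1 ▸ hp.1) hq.2.1)
    (Set.toFinite _)
  rw [Set.ncard_coe_finset] at h4
  omega
end
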